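/- arXiv:2603.13508 — 5 statements merged into one kernel-verified Lean document; each statement's English description precedes it below -/
import Mathlib

section
/- Let n ∈ ℕ, let a : Fin n → ℝ be a coefficient vector, b ∈ ℝ, let i be an index with a i > 0, and let ℓ, u : Fin n → ℝ satisfy ℓ j ≤ u j for every j ≠ i. Define T := (b − ∑_{j ≠ i, a j > 0} a j · ℓ j − ∑_{j ≠ i, a j < 0} a j · u j) / a i. Then for every x ∈ ℝ: there exists y : Fin n → ℝ with y i = x, ℓ j ≤ y j ≤ u j for all j ≠ i, and ∑_j a j · y j ≤ b, if and only if x ≤ T. In particular, T is exactly the tightened upper bound on variable i computed by the bound-tightening formula of the constraint propagation-based sampling algorithm, and no value of x compatible with the constraint and the box bounds is excluded by the tightening. -/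
/-- Bound tightening for a positive-coefficient variable: the tightened upper bound
`T = (b − ∑_{j ≠ i, a j > 0} a j ℓ j − ∑_{j ≠ i, a j < 0} a j u j) / a i` exactly
characterizes the values of variable `i` that admit a feasible completion. -/
theorem bound_tightening_pos_coeff
    (n : ℕ) (a : Fin n → ℝ) (b : ℝ) (i : Fin n) (hai : 0 < a i)
    (ℓ u : Fin n → ℝ) (hlu : ∀ j : Fin n, j ≠ i → ℓ j ≤ u j) :
    ∀ x : ℝ,
      (∃ y : Fin n → ℝ, y i = x ∧ (∀ j : Fin n, j ≠ i → ℓ j ≤ y j ∧ y j ≤ u j) ∧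
        ∑ j, a j * y j ≤ b) ↔
      x ≤ (b - ∑ j ∈ Finset.univ.filter (fun j => j ≠ i ∧ 0 < a j), a j * ℓ j
             - ∑ j ∈ Finset.univ.filter (fun j => j ≠ i ∧ a j < 0), a j * u j) / a i := by
  intro x
  have key : ∑ j, a j * (if j = i then x else if 0 < a j then ℓ j else u j)
      = a i * x + ∑ j ∈ Finset.univ.filter (fun j => j ≠ i ∧ 0 < a j), a j * ℓ j
        + ∑ j ∈ Finset.univ.filter (fun j => j ≠ i ∧ a j < 0), a j * u j := by
    have h1 : a i * x = ∑ j, if j = i then a j * x else 0 := by simp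
    rw [h1, Finset.sum_filter, Finset.sum_filter, ← Finset.sum_add_distrib,
      ← Finset.sum_add_distrib]
    refine Finset.sum_congr rfl fun j _ => ?_
    by_cases hj : j = i
    · simp [hj]
    · rcases lt_trichotomy (a j) 0 with h | h | h
      · simp [hj, h, h.le, not_lt.mpr h.le]
      · simp [hj, h]
      · simp [hj, h, not_lt.mpr h.le]
  rw [le_div_iff₀ hai]
  constructor
  · rintro ⟨y, hy, hb, hs⟩
    have h2 : ∑ j, a j * (if j = i then x else if 0 < a j then ℓ j else u j)
        ≤ ∑ j, a j * y j := by
      refine Finset.sum_le_sum fun j _ => ?_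
      by_cases hj : j = i
      · subst hj
        simp [hy]
      · by_cases h : 0 < a j
        · simp only [hj, h, if_true, if_false]
          exact mul_le_mul_of_nonneg_left (hb j hj).1 h.le
        · simp only [hj, h, if_false]
          exact mul_le_mul_of_nonpos_left (hb j hj).2 (not_lt.mp h)
    linarith
  · intro hx
    refine ⟨fun j => if j = i then x else if 0 < a j then ℓ j else u j, by simp, ?_, ?_⟩
    · intro j hj
      have := hlu j hj
      by_cases h : 0 < a j <;> simp [hj, h, this]
    · linarith
end

section
/- Let n ∈ ℕ, let a : Fin n → ℝ be a coefficient vector, b ∈ ℝ, let i be an index with a i < 0, and let ℓ, u : Fin n → ℝ satisfy ℓ j ≤ u j for every j ≠ i. Define T := (b − ∑_{j ≠ i, a j > 0} a j · ℓ j − ∑_{j ≠ i, a j < 0} a j · u j) / a i. Then for every x ∈ ℝ: there exists y : Fin n → ℝ with y i = x, ℓ j ≤ y j ≤ u j for all j ≠ i, and ∑_j a j · y j ≤ b, if and only if x ≥ T. In particular, T is exactly the tightened lower bound on variable i computed by the bound-tightening formula of the constraint propagation-based sampling algorithm when the coefficient of variable i is negative. -/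
/-- Bound tightening for a negative-coefficient variable: the tightened lower bound
`T = (b − ∑_{j ≠ i, a j > 0} a j ℓ j − ∑_{j ≠ i, a j < 0} a j u j) / a i` exactly
characterizes the values of variable `i` that admit a feasible completion. -/
theorem bound_tightening_neg_coeff
    (n : ℕ) (a : Fin n → ℝ) (b : ℝ) (i : Fin n) (hai : a i < 0)
    (ℓ u : Fin n → ℝ) (hlu : ∀ j : Fin n, j ≠ i → ℓ j ≤ u j) :
    ∀ x : ℝ,
      (∃ y : Fin n → ℝ, y i = x ∧ (∀ j : Fin n, j ≠ i → ℓ j ≤ y j ∧ y j ≤ u j) ∧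
        ∑ j, a j * y j ≤ b) ↔
      x ≥ (b - ∑ j ∈ Finset.univ.filter (fun j => j ≠ i ∧ 0 < a j), a j * ℓ j
             - ∑ j ∈ Finset.univ.filter (fun j => j ≠ i ∧ a j < 0), a j * u j) / a i := by
  intro x
  rw [ge_iff_le, div_le_iff_of_neg hai]
  have key : ∑ j, a j * (if j = i then x else if 0 < a j then ℓ j else u j)
      = x * a i + ∑ j ∈ Finset.univ.filter (fun j => j ≠ i ∧ 0 < a j), a j * ℓ j
             + ∑ j ∈ Finset.univ.filter (fun j => j ≠ i ∧ a j < 0), a j * u j := by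
    have h1 : x * a i = ∑ j, if j = i then x * a j else 0 := by simp
    rw [h1, Finset.sum_filter, Finset.sum_filter, ← Finset.sum_add_distrib,
      ← Finset.sum_add_distrib]
    refine Finset.sum_congr rfl fun j _ => ?_
    by_cases hj : j = i
    · simp [hj, mul_comm]
    · rcases lt_trichotomy (a j) 0 with h | h | h
      · simp [hj, h, h.not_gt]
      · simp [hj, h]
      · simp [hj, h, h.not_gt]
  constructor
  · rintro ⟨y, hy, hb, hs⟩
    have hle : ∑ j, a j * (if j = i then x else if 0 < a j then ℓ j else u j)
        ≤ ∑ j, a j * y j := by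
      refine Finset.sum_le_sum fun j _ => ?_
      by_cases hj : j = i
      · subst hj
        simp [hy]
      · obtain ⟨h1, h2⟩ := hb j hj
        by_cases h : 0 < a j
        · simp only [hj, h, if_true, if_false]
          exact mul_le_mul_of_nonneg_left h1 h.le
        · simp only [hj, h, if_false]
          exact mul_le_mul_of_nonpos_left h2 (not_lt.mp h)
    linarith
  · intro h
    refine ⟨fun j => if j = i then x else if 0 < a j then ℓ j else u j, by simp, ?_, ?_⟩
    · intro j hj
      have := hlu j hj
      by_cases h : 0 < a j <;> simp [hj, h, this]
    · show ∑ j, a j * (if j = i then x else if 0 < a j then ℓ j else u j) ≤ b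
      linarith
end

section
/- Let A be an m × n real matrix with nonnegative entries, let b ∈ ℝ^m and u ∈ ℝ^n have nonnegative entries, and let π : Fin n ≃ Fin n be any ordering of the variables. Suppose x : Fin n → ℝ is constructed sequentially so that for every step k: 0 ≤ x (π k), x (π k) ≤ u (π k), and for every constraint r with A r (π k) > 0, A r (π k) · x (π k) ≤ b r − ∑_{k' < k} A r (π k') · x (π k'). Then the resulting sample is feasible: 0 ≤ x j ≤ u j for every j, and ∑_j A r j · x j ≤ b r for every constraint r. -/
/-- In the nonnegative-data CEP setting (`A, b, u ≥ 0`, `ℓ = 0`), any sample generated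
sequentially by the constraint propagation-based sampling algorithm is feasible. -/
theorem constraint_propagation_sampling_feasible
    (m n : ℕ) (A : Fin m → Fin n → ℝ) (b : Fin m → ℝ) (u : Fin n → ℝ)
    (hA : ∀ r j, 0 ≤ A r j) (hb : ∀ r, 0 ≤ b r) (hu : ∀ j, 0 ≤ u j)
    (π : Fin n ≃ Fin n) (x : Fin n → ℝ)
    (hx0 : ∀ k : Fin n, 0 ≤ x (π k))
    (hxu : ∀ k : Fin n, x (π k) ≤ u (π k))
    (hres : ∀ (k : Fin n) (r : Fin m), 0 < A r (π k) →
      A r (π k) * x (π k) ≤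
        b r - ∑ k' ∈ Finset.univ.filter (fun k' => k' < k), A r (π k') * x (π k')) :
    (∀ j : Fin n, 0 ≤ x j ∧ x j ≤ u j) ∧ (∀ r : Fin m, ∑ j, A r j * x j ≤ b r) := by
  refine ⟨fun j => ?_, fun r => ?_⟩
  · have h1 := hx0 (π.symm j)
    have h2 := hxu (π.symm j)
    rw [Equiv.apply_symm_apply] at h1 h2
    exact ⟨h1, h2⟩
  · have key : ∀ t : ℕ, ∑ k' ∈ Finset.univ.filter (fun k' : Fin n => k'.val < t),
        A r (π k') * x (π k') ≤ b r := by
      intro t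
      induction t with
      | zero => simpa using hb r
      | succ t ih =>
        by_cases ht : t < n
        · have hs : Finset.univ.filter (fun k' : Fin n => k'.val < t + 1)
              = insert (⟨t, ht⟩ : Fin n) (Finset.univ.filter (fun k' : Fin n => k'.val < t)) := by
            ext k
            simp only [Finset.mem_filter, Finset.mem_univ, true_and, Finset.mem_insert, Fin.ext_iff]
            omega
          rw [hs, Finset.sum_insert (by simp)]
          rcases (hA r (π ⟨t, ht⟩)).lt_or_eq with h | h
          · have h3 := hres ⟨t, ht⟩ r h
            simp only [Fin.lt_def] at h3
            linarith
          · rw [← h]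
            linarith
        · have hs : Finset.univ.filter (fun k' : Fin n => k'.val < t + 1)
              = Finset.univ.filter (fun k' : Fin n => k'.val < t) := by
            ext k
            have := k.isLt
            simp only [Finset.mem_filter, Finset.mem_univ, true_and]
            omega
          rw [hs]
          exact ih
    have h := key n
    rw [Finset.filter_true_of_mem (fun k _ => k.isLt)] at h
    rwa [Equiv.sum_comp π (fun j => A r j * x j)] at h
end

section
/- Let A be an m × n real matrix with nonnegative entries, let b ∈ ℝ^m and u ∈ ℝ^n have nonnegative entries, and let π : Fin n ≃ Fin n be any ordering of the variables. Suppose x : Fin n → ℝ is constructed sequentially so that for every step k: 0 ≤ x (π k), x (π k) ≤ u (π k), and for every constraint r with A r (π k) > 0, A r (π k) · x (π k) ≤ b r − ∑_{k' < k} A r (π k') · x (π k'). Then for every step k and every constraint r, the residual b r − ∑_{k' < k} A r (π k') · x (π k') is nonnegative; consequently, at every step k the sampling interval [0, min(u (π k), min{(b r − ∑_{k' < k} A r (π k') · x (π k')) / (A r (π k)) : A r (π k) > 0})] is nonempty, i.e., its right endpoint is nonnegative. -/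
/-- In the nonnegative-data CEP setting (`A, b, u ≥ 0`, `ℓ = 0`), the residuals remain
nonnegative throughout the constraint propagation-based sampling algorithm, and hence
the right endpoint of the sampling interval at each step is nonnegative, so the
sampling interval is nonempty. -/
theorem constraint_propagation_sampling_interval_nonempty
    (m n : ℕ) (A : Fin m → Fin n → ℝ) (b : Fin m → ℝ) (u : Fin n → ℝ)
    (hA : ∀ r j, 0 ≤ A r j) (hb : ∀ r, 0 ≤ b r) (hu : ∀ j, 0 ≤ u j)
    (π : Fin n ≃ Fin n) (x : Fin n → ℝ)
    (hx0 : ∀ k : Fin n, 0 ≤ x (π k))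
    (hxu : ∀ k : Fin n, x (π k) ≤ u (π k))
    (hres : ∀ (k : Fin n) (r : Fin m), 0 < A r (π k) →
      A r (π k) * x (π k) ≤
        b r - ∑ k' ∈ Finset.univ.filter (fun k' => k' < k), A r (π k') * x (π k')) :
    (∀ (k : Fin n) (r : Fin m),
      0 ≤ b r - ∑ k' ∈ Finset.univ.filter (fun k' => k' < k), A r (π k') * x (π k')) ∧
    (∀ k : Fin n,
      0 ≤ sInf (insert (u (π k))
        {t : ℝ | ∃ r : Fin m, 0 < A r (π k) ∧
          t = (b r - ∑ k' ∈ Finset.univ.filter (fun k' => k' < k),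
                 A r (π k') * x (π k')) / A r (π k)})) := by
  have key : ∀ (N : ℕ) (hN : N < n) (r : Fin m),
      0 ≤ b r - ∑ k' ∈ Finset.univ.filter (fun k' => k' < (⟨N, hN⟩ : Fin n)),
        A r (π k') * x (π k') := by
    intro N
    induction N with
    | zero =>
      intro hN r
      have h : Finset.univ.filter (fun k' => k' < (⟨0, hN⟩ : Fin n)) = ∅ := by
        ext k'
        simp [Fin.lt_def]
      rw [h]
      simpa using hb r
    | succ N ih =>
      intro hN r
      have hN' : N < n := by omega
      have h : Finset.univ.filter (fun k' => k' < (⟨N + 1, hN⟩ : Fin n)) =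
          insert (⟨N, hN'⟩ : Fin n)
            (Finset.univ.filter (fun k' => k' < (⟨N, hN'⟩ : Fin n))) := by
        ext k'
        simp only [Finset.mem_filter, Finset.mem_univ, true_and, Finset.mem_insert,
          Fin.lt_def, Fin.ext_iff]
        omega
      rw [h, Finset.sum_insert (by simp)]
      have h1 := ih hN' r
      rcases (hA r (π ⟨N, hN'⟩)).eq_or_lt with h0 | h0
      · rw [← h0]
        linarith
      · have h2 := hres ⟨N, hN'⟩ r h0
        linarith
  refine ⟨fun k r => key k.1 k.2 r, fun k => ?_⟩
  apply Real.sInf_nonneg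
  rintro t (rfl | ⟨r, hr, rfl⟩)
  · exact hu _
  · exact div_nonneg (key k.1 k.2 r) hr.le
end

section
/- Let n ∈ ℕ, let a : Fin n → ℝ, b ∈ ℝ, let i be an index with a i > 0, and let ℓ, u : Fin n → ℝ satisfy ℓ j ≤ u j for every j ≠ i. Define the extreme completion y : Fin n → ℝ by y j = ℓ j if a j > 0, y j = u j if a j < 0, and y j = ℓ j if a j = 0 (for j ≠ i). If x ∈ ℝ satisfies a i · x ≤ b − ∑_{j ≠ i, a j > 0} a j · ℓ j − ∑_{j ≠ i, a j < 0} a j · u j, then setting y i = x yields ℓ j ≤ y j ≤ u j for all j ≠ i and ∑_j a j · y j ≤ b; that is, any value of variable i within the tightened bound admits a feasible completion of the remaining variables within their box bounds. -/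
/-- The extreme completion (positive-coefficient variables at lower bounds,
negative-coefficient variables at upper bounds, zero-coefficient variables at lower
bounds) certifies feasibility of any value of variable `i` within the tightened
bound computed by the constraint propagation-based sampling algorithm. -/
theorem extreme_completion_feasible
    (n : ℕ) (a : Fin n → ℝ) (b : ℝ) (i : Fin n) (hai : 0 < a i)
    (ℓ u : Fin n → ℝ) (hlu : ∀ j : Fin n, j ≠ i → ℓ j ≤ u j)
    (x : ℝ)
    (hx : a i * x ≤ b - ∑ j ∈ Finset.univ.filter (fun j => j ≠ i ∧ 0 < a j), a j * ℓ j
            - ∑ j ∈ Finset.univ.filter (fun j => j ≠ i ∧ a j < 0), a j * u j)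
    (y : Fin n → ℝ)
    (hy : y = fun j => if j = i then x else if a j < 0 then u j else ℓ j) :
    (∀ j : Fin n, j ≠ i → ℓ j ≤ y j ∧ y j ≤ u j) ∧ ∑ j, a j * y j ≤ b := by
  subst hy
  constructor
  · intro j hj
    have h := hlu j hj
    by_cases h0 : a j < 0 <;> simp [hj, h0, h]
  · have key : ∑ j, a j * (if j = i then x else if a j < 0 then u j else ℓ j)
        = ∑ j, ((if j = i then a j * x else 0)
          + (if j ≠ i ∧ 0 < a j then a j * ℓ j else 0)
          + (if j ≠ i ∧ a j < 0 then a j * u j else 0)) := by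
      apply Finset.sum_congr rfl
      intro j _
      by_cases hj : j = i
      · simp [hj]
      · rcases lt_trichotomy (a j) 0 with h | h | h
        · simp [hj, h, h.le, not_lt.mpr h.le]
        · simp [hj, h]
        · simp [hj, h, not_lt.mpr h.le]
    rw [Finset.sum_filter, Finset.sum_filter] at hx
    rw [Finset.sum_add_distrib, Finset.sum_add_distrib, Finset.sum_ite_eq' Finset.univ i] at key
    simp only [Finset.mem_univ, if_true] at key
    show ∑ j, a j * (if j = i then x else if a j < 0 then u j else ℓ j) ≤ b
    linarith
end
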